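/- Consider the 1-D periodic reduced problem γ_t = d∫₀^{M+L} k_*(x-y)γ⁺(t,y)dy - dγ⁺(t,x) on (0, M+L) with γ(0,·) = c₀ := ‖γ₀‖ on [0,M] and γ(0,·) = -ℓ₀ on (M, M+L), where k_* ≥ 0 with ∫₀^{M+L} k_* = 1. Then for every T > 0, the measure of the set Σ̃₁(T) ∩ (M, M+L), where Σ̃₁(T) = {x : γ(T,x) ≥ 0}, satisfies |Σ̃₁(T) ∩ (M, M+L)| ≤ (c₀/ℓ₀) M. In particular, if L > (c₀/ℓ₀) M then the total positivity set ⋃_{t≥0} Σ̃₁(t) ∩ (0, M+L) has measure strictly less than M+L. -/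

import Mathlib

open MeasureTheory Filter

lemma hasDerivAt_minsq (y : ℝ) : HasDerivAt (fun y : ℝ => (min y 0)^2) (2 * min y 0) y := by
  rcases lt_trichotomy y 0 with h | h | h
  · have : HasDerivAt (fun y : ℝ => y^2) (2 * min y 0) y := by
      rw [min_eq_left h.le]; simpa using hasDerivAt_pow 2 y
    refine this.congr_of_eventuallyEq ?_
    filter_upwards [Iio_mem_nhds h] with z hz
    rw [min_eq_left (le_of_lt hz)]
  · subst h
    rw [hasDerivAt_iff_isLittleO]
    simp only [min_self, mul_zero, smul_zero, sub_zero]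
    have h2 : (fun x : ℝ => x^2) =o[nhds 0] (fun x : ℝ => x) := by
      simpa using Asymptotics.isLittleO_pow_pow (𝕜 := ℝ) (m := 1) (n := 2) (by norm_num)
    refine Asymptotics.IsBigO.trans_isLittleO ?_ h2
    refine Asymptotics.IsBigO.of_bound 1 (Eventually.of_forall fun x => ?_)
    simp only [Real.norm_eq_abs, one_mul]
    rcases le_total x 0 with h | h
    · simp [min_eq_left h]
    · simp [min_eq_right h]; positivity
  · have : HasDerivAt (fun y : ℝ => (0:ℝ)) (2 * min y 0) y := by
      rw [min_eq_right h.le]; simpa using hasDerivAt_const y (0:ℝ)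
    refine this.congr_of_eventuallyEq ?_
    filter_upwards [Ioi_mem_nhds h] with z hz
    rw [min_eq_right (le_of_lt hz)]; simp

lemma odeA {d : ℝ} (hd : 0 < d) {g i : ℝ → ℝ} (hc : ContinuousOn g (Set.Ici 0))
    (hg : ∀ t > 0, HasDerivAt g (d * i t - d * max (g t) 0) t) (hi : ∀ t > 0, 0 ≤ i t)
    {s t : ℝ} (hs : 0 ≤ s) (hst : s ≤ t) : min (g s) 0 ≤ min (g t) 0 := by
  have hanti : AntitoneOn (fun r => (min (g r) 0)^2) (Set.Ici 0) := by
    refine antitoneOn_of_hasDerivWithinAt_nonpos (convex_Ici 0)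
      (f' := fun r => 2 * min (g r) 0 * (d * i r - d * max (g r) 0)) ?_ ?_ ?_
    · fun_prop
    · intro x hx
      rw [interior_Ici] at hx
      exact ((hasDerivAt_minsq (g x)).comp x (hg x hx)).hasDerivWithinAt
    · intro x hx
      rw [interior_Ici] at hx
      have := hi x hx
      rcases le_total (g x) 0 with h | h
      · simp only [min_eq_left h, max_eq_right h]
        have : 0 ≤ (-g x) * (d * i x) := by
          apply mul_nonneg (by linarith); positivity
        nlinarith
      · simp [min_eq_right h]
  have h := hanti (a := s) (b := t) hs (hs.trans hst) hst
  simp only at h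
  have h1 : min (g s) 0 ≤ 0 := min_le_right _ _
  have h2 : min (g t) 0 ≤ 0 := min_le_right _ _
  nlinarith

lemma odePos {d : ℝ} (hd : 0 < d) {g i : ℝ → ℝ} (hc : ContinuousOn g (Set.Ici 0))
    (hg : ∀ t > 0, HasDerivAt g (d * i t - d * max (g t) 0) t) (hi : ∀ t > 0, 0 ≤ i t)
    {s t : ℝ} (hs : 0 ≤ s) (hst : s ≤ t) (h0 : 0 ≤ g s) : 0 ≤ g t := by
  have := odeA hd hc hg hi hs hst
  rw [min_eq_right h0] at this
  exact (le_min_iff.1 this).1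

lemma hasDerivAt_V {d : ℝ} {g i : ℝ → ℝ} {t : ℝ}
    (hg : HasDerivAt g (d * i t - d * max (g t) 0) t) :
    HasDerivAt (fun r => Real.exp (d * r) * g r)
      (d * (Real.exp (d * t) * i t) + d * Real.exp (d * t) * min (g t) 0) t := by
  have h1 : HasDerivAt (fun r => Real.exp (d * r)) (Real.exp (d * t) * d) t := by
    simpa using ((hasDerivAt_id t).const_mul d).exp
  refine (h1.mul hg).congr_deriv ?_
  have : g t = max (g t) 0 + min (g t) 0 := by rw [max_add_min]; simp
  linear_combination (Real.exp (d * t) * d) * this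

/-- comparison from below -/
lemma odeLow {d : ℝ} (hd : 0 < d) {g i : ℝ → ℝ} (hc : ContinuousOn g (Set.Ici 0))
    (hg : ∀ t > 0, HasDerivAt g (d * i t - d * max (g t) 0) t) (hi : ∀ t > 0, 0 ≤ i t)
    {t₀ : ℝ} (ht₀ : 0 ≤ t₀) (h0 : 0 ≤ g t₀) {Q Q' : ℝ → ℝ} (hQ : ∀ t, HasDerivAt Q (Q' t) t)
    (hQi : ∀ t > t₀, Q' t ≤ d * (Real.exp (d * t) * i t))
    (hQ0 : Q t₀ ≤ Real.exp (d * t₀) * g t₀) {t : ℝ} (ht : t₀ ≤ t) :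
    Q t ≤ Real.exp (d * t) * g t := by
  have hm : MonotoneOn (fun r => Real.exp (d * r) * g r - Q r) (Set.Ici t₀) := by
    refine monotoneOn_of_hasDerivWithinAt_nonneg (convex_Ici t₀)
      (f' := fun t => (d * (Real.exp (d * t) * i t) + d * Real.exp (d * t) * min (g t) 0) - Q' t)
      ?_ ?_ ?_
    · have hc' : ContinuousOn g (Set.Ici t₀) := hc.mono (Set.Ici_subset_Ici.2 ht₀)
      have : Continuous Q := continuous_iff_continuousAt.2 fun t => (hQ t).continuousAt
      fun_prop
    · intro x hx
      rw [interior_Ici] at hx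
      exact ((hasDerivAt_V (hg x (lt_of_le_of_lt ht₀ hx))).sub (hQ x)).hasDerivWithinAt
    · intro x hx
      rw [interior_Ici] at hx
      have h1 := odePos hd hc hg hi ht₀ (le_of_lt hx) h0
      have h2 := hQi x hx
      rw [min_eq_right h1]; linarith
  have := hm (a := t₀) (b := t) (Set.mem_Ici.2 le_rfl) ht ht
  simp only at this
  linarith

lemma odeB {d : ℝ} (hd : 0 < d) {g i : ℝ → ℝ} (hc : ContinuousOn g (Set.Ici 0))
    (hg : ∀ t > 0, HasDerivAt g (d * i t - d * max (g t) 0) t) (hi : ∀ t > 0, 0 ≤ i t)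
    {s t : ℝ} (hs : 0 ≤ s) (hst : s ≤ t) :
    Real.exp (d * s) * max (g s) 0 ≤ Real.exp (d * t) * max (g t) 0 := by
  rcases le_total (g s) 0 with h | h
  · rw [max_eq_right h]; simp; positivity
  · rw [max_eq_left h, max_eq_left (odePos hd hc hg hi hs hst h)]
    refine odeLow hd hc hg hi hs h (Q := fun _ => Real.exp (d * s) * g s) (Q' := fun _ => 0)
      (fun t => hasDerivAt_const _ _) ?_ le_rfl hst
    intro t ht
    have := hi t (by linarith)
    positivity

/-- comparison from above -/
lemma odeUp {d : ℝ} (hd : 0 < d) {g i : ℝ → ℝ} (hc : ContinuousOn g (Set.Ici 0))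
    (hg : ∀ t > 0, HasDerivAt g (d * i t - d * max (g t) 0) t)
    {t₀ : ℝ} {Q Q' : ℝ → ℝ} (hQ : ∀ t, HasDerivAt Q (Q' t) t)
    (hQi : ∀ t > 0, t < t₀ → d * (Real.exp (d * t) * i t) ≤ Q' t)
    (hQ0 : g 0 ≤ Q 0) {t : ℝ} (ht0 : 0 ≤ t) (ht : t ≤ t₀) :
    Real.exp (d * t) * g t ≤ Q t := by
  have hm : AntitoneOn (fun r => Real.exp (d * r) * g r - Q r) (Set.Icc 0 t₀) := by
    refine antitoneOn_of_hasDerivWithinAt_nonpos (convex_Icc 0 t₀)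
      (f' := fun t => (d * (Real.exp (d * t) * i t) + d * Real.exp (d * t) * min (g t) 0) - Q' t)
      ?_ ?_ ?_
    · have hc' : ContinuousOn g (Set.Icc 0 t₀) := hc.mono Set.Icc_subset_Ici_self
      have : Continuous Q := continuous_iff_continuousAt.2 fun t => (hQ t).continuousAt
      fun_prop
    · intro x hx
      rw [interior_Icc] at hx
      exact ((hasDerivAt_V (hg x hx.1)).sub (hQ x)).hasDerivWithinAt
    · intro x hx
      rw [interior_Icc] at hx
      have h2 := hQi x hx.1 hx.2
      have h3 : d * Real.exp (d * x) * min (g x) 0 ≤ 0 :=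
        mul_nonpos_of_nonneg_of_nonpos (by positivity) (min_le_right _ _)
      linarith
  have := hm (a := 0) (b := t) ⟨le_rfl, ht0.trans ht⟩ ⟨ht0, ht⟩ ht0
  simp at this
  linarith

lemma odeDarboux {d : ℝ} (hd : 0 < d) {g i : ℝ → ℝ} (hc : ContinuousOn g (Set.Ici 0))
    (hg : ∀ t > 0, HasDerivAt g (d * i t - d * max (g t) 0) t)
    {t₀ t₁ : ℝ} (ht₀ : 0 < t₀) (h01 : t₀ < t₁) (hpos : 0 < i t₀) (hz : i t₁ = 0)
    (hgap : ∀ s, t₀ ≤ s → s ≤ t₁ → i s = 0 ∨ Real.exp (d * t₀) * i t₀ ≤ Real.exp (d * s) * i s) :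
    False := by
  let u : ℝ → ℝ := fun t => d * max (g (max t 0)) 0
  have hu : Continuous u := by
    have : Continuous fun t : ℝ => g (max t 0) :=
      hc.comp_continuous (by fun_prop) (fun x => Set.mem_Ici.2 (le_max_right _ _))
    exact continuous_const.mul (this.max continuous_const)
  let G : ℝ → ℝ := fun t => g t + ∫ r in (0:ℝ)..t, u r
  have hG : ∀ t > 0, HasDerivAt G (d * i t) t := by
    intro t ht
    have h1 : HasDerivAt (fun t => ∫ r in (0:ℝ)..t, u r) (u t) t :=
      intervalIntegral.integral_hasDerivAt_right (hu.intervalIntegrable _ _)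
        (hu.stronglyMeasurableAtFilter _ _) hu.continuousAt
    refine ((hg t ht).add h1).congr_deriv ?_
    simp [u, max_eq_left ht.le]
  set δ := Real.exp (d * t₀) * i t₀ / Real.exp (d * t₁) with hδ
  have hδpos : 0 < δ := by positivity
  have hδle : δ ≤ i t₀ := by
    rw [hδ, div_le_iff₀ (by positivity), mul_comm]
    gcongr
  have := exists_hasDerivWithinAt_eq_of_lt_of_gt (f := G) (f' := fun t => d * i t) (m := d * (δ/2))
    h01.le (fun x hx => (hG x (by linarith [hx.1])).hasDerivWithinAt) (by gcongr; linarith)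
    (by rw [hz]; simp; positivity)
  obtain ⟨s, hs, hse⟩ := this
  have hse : i s = δ / 2 := mul_left_cancel₀ hd.ne' hse
  rcases hgap s hs.1.le hs.2.le with h | h
  · linarith
  · have h2 : Real.exp (d * s) * i s ≤ Real.exp (d * t₁) * (δ/2) := by
      rw [hse]; gcongr; exact hs.2.le
    have h3 : Real.exp (d * t₁) * δ = Real.exp (d * t₀) * i t₀ := by
      rw [hδ]; field_simp
    have : 0 < Real.exp (d * t₀) * i t₀ := by positivity
    linarith

lemma kint (P : ℝ) (k : ℝ → ℝ) (hk0 : ∀ x, 0 ≤ k x)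
    (hP : 0 < P) (hper : Function.Periodic k P)
    (hint : ∫ x in Set.Ioo (0:ℝ) P, k x = 1) (x : ℝ) :
    ∫⁻ y in Set.Ioo (0:ℝ) P, ENNReal.ofReal (k (x - y)) = 1 ∧
    ∫⁻ y in Set.Ioo (0:ℝ) P, ENNReal.ofReal (k (y - x)) = 1 := by
  have h0 : ∫ y in (0:ℝ)..P, k y = 1 := by
    rw [intervalIntegral.integral_of_le hP.le, integral_Ioc_eq_integral_Ioo, hint]
  have key : ∀ f : ℝ → ℝ, (∀ y, 0 ≤ f y) → ∫ y in (0:ℝ)..P, f y = 1 →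
      ∫⁻ y in Set.Ioo (0:ℝ) P, ENNReal.ofReal (f y) = 1 := by
    intro f hf h
    rw [intervalIntegral.integral_of_le hP.le, integral_Ioc_eq_integral_Ioo] at h
    rw [← ofReal_integral_eq_lintegral_ofReal ?_ (Eventually.of_forall hf), h]
    · simp
    · by_contra hn
      rw [integral_undef hn] at h
      norm_num at h
  constructor
  · apply key (fun y => k (x - y)) (fun y => hk0 _)
    rw [intervalIntegral.integral_comp_sub_left (fun y => k y) x, ← h0]
    have := hper.intervalIntegral_add_eq (x - P) 0
    simpa using this
  · apply key (fun y => k (y - x)) (fun y => hk0 _)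
    rw [intervalIntegral.integral_comp_sub_right (fun y => k y) x, ← h0]
    have := hper.intervalIntegral_add_eq (0 - x) 0
    simpa [sub_eq_neg_add] using this

lemma hasDerivAt_polyQ (d c a t₀ : ℝ) (n : ℕ) (t : ℝ) :
    HasDerivAt (fun t => c * Real.exp (d * t) + (d * (t - t₀))^(n+1) / ((n+1).factorial : ℝ) * a)
      (d * (c * Real.exp (d * t) + (d * (t - t₀))^n / (n.factorial : ℝ) * a)) t := by
  have h1 : HasDerivAt (fun r => Real.exp (d * r)) (Real.exp (d * t) * d) t := by
    simpa using ((hasDerivAt_id t).const_mul d).exp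
  have h2 : HasDerivAt (fun t => d * (t - t₀)) d t := by
    simpa using ((hasDerivAt_id t).sub_const t₀).const_mul d
  refine ((h1.const_mul c).add (((h2.pow (n+1)).div_const _).mul_const a)).congr_deriv ?_
  rw [Nat.factorial_succ]
  push_cast
  have : (n.factorial : ℝ) ≠ 0 := by positivity
  have : (n + 1 : ℝ) ≠ 0 := by positivity
  field_simp
  try simp only [Nat.add_sub_cancel]
  try ring

open Classical in
/-- iterated kernel -/
noncomputable def itK (Ω : Set ℝ) (k : ℝ → ℝ) (S : Set ℝ) (f : ℝ → ENNReal) : ℕ → ℝ → ENNReal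
  | 0 => f
  | (n+1) => fun x => if x ∈ S then
      ∫⁻ y in Ω, ENNReal.ofReal (k (x - y)) * itK Ω k S f n y else 0

lemma supBound (d c₀ P : ℝ) (hd : 0 < d) (hc₀ : 0 < c₀) (hP : 0 < P)
    (k : ℝ → ℝ) (hk0 : ∀ x, 0 ≤ k x) (hkm : Measurable k) (hper : Function.Periodic k P)
    (hint : ∫ x in Set.Ioo (0:ℝ) P, k x = 1)
    (γ : ℝ → ℝ → ℝ)
    (hcont : ∀ x, ContinuousOn (fun t => γ t x) (Set.Ici 0))
    (hmeas : ∀ t, Measurable (γ t))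
    (hpde : ∀ t > (0:ℝ), ∀ x, HasDerivAt (fun s => γ s x)
        (d * (∫ y in Set.Ioo (0:ℝ) P, k (x - y) * max (γ t y) 0)
          - d * max (γ t x) 0) t)
    (hinit : ∀ x ∈ Set.Ioo (0:ℝ) P, γ 0 x ≤ c₀) :
    ∀ t ≥ (0:ℝ), ∀ x ∈ Set.Ioo (0:ℝ) P, γ t x ≤ c₀ := by
  set Ω := Set.Ioo (0:ℝ) P with hΩ
  set I : ℝ → ℝ → ℝ := fun x t => ∫ y in Ω, k (x - y) * max (γ t y) 0 with hI
  have hI0 : ∀ x t, 0 ≤ I x t := fun x t =>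
    integral_nonneg fun y => mul_nonneg (hk0 _) (le_max_right _ _)
  have hi : ∀ x, ∀ t > 0, 0 ≤ I x t := fun x t _ => hI0 x t
  have hg : ∀ x, ∀ t > 0, HasDerivAt (fun s => γ s x) (d * I x t - d * max (γ t x) 0) t :=
    fun x t ht => hpde t ht x
  set U : ℝ → ℝ → ℝ := fun t x => Real.exp (d * t) * max (γ t x) 0 with hU
  have hU0 : ∀ t x, 0 ≤ U t x := fun t x => mul_nonneg (Real.exp_pos _).le (le_max_right _ _)
  have hUmono : ∀ x s t, 0 ≤ s → s ≤ t → U s x ≤ U t x := fun x s t hs hst =>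
    odeB hd (hcont x) (hg x) (hi x) hs hst
  set A : ℝ → ℝ → ENNReal := fun t x =>
    ∫⁻ y in Ω, ENNReal.ofReal (k (x - y)) * ENNReal.ofReal (U t y) with hA
  have hAmono : ∀ x s t, 0 ≤ s → s ≤ t → A s x ≤ A t x := fun x s t hs hst =>
    lintegral_mono fun y => by
      dsimp only
      gcongr
      exact hUmono y s t hs hst
  have hAI : ∀ t x, Real.exp (d * t) * I x t = (A t x).toReal := by
    intro t x
    rw [hI, hA]
    dsimp only
    rw [← integral_const_mul, integral_eq_lintegral_of_nonneg_ae]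
    · congr 1
      refine lintegral_congr fun y => ?_
      rw [← ENNReal.ofReal_mul (hk0 _)]
      congr 1
      rw [hU]; ring
    · exact Eventually.of_forall fun y =>
        mul_nonneg (Real.exp_pos _).le (mul_nonneg (hk0 _) (le_max_right _ _))
    · have := hmeas t
      refine Measurable.aestronglyMeasurable ?_
      fun_prop
  -- dichotomy
  have hdich : ∀ x, (∃ t > 0, A t x = ⊤) → ∀ t > 0, I x t = 0 := by
    rintro x ⟨t₁, ht₁, htop⟩ t ht
    have hz : ∀ s, A s x = ⊤ → I x s = 0 := by
      intro s hs
      have := hAI s x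
      rw [hs] at this
      simpa [(Real.exp_pos _).ne'] using this
    rcases le_or_gt t₁ t with h | h
    · apply hz
      have := hAmono x t₁ t ht₁.le h
      rw [htop] at this
      exact top_le_iff.1 this
    · by_contra hne
      have hpos : 0 < I x t := lt_of_le_of_ne (hI0 x t) (Ne.symm hne)
      refine odeDarboux hd (hcont x) (hg x) ht h hpos (hz _ htop) ?_
      intro s hs hs1
      by_cases hs' : A s x = ⊤
      · exact Or.inl (hz s hs')
      · right
        rw [hAI, hAI]
        exact ENNReal.toReal_mono hs' (hAmono x t s ht.le hs)
  -- main
  intro t₀ ht₀ x₀ hx₀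
  rcases eq_or_lt_of_le ht₀ with h | ht₀
  · rw [← h]; exact hinit x₀ hx₀
  set S : Set ℝ := {x | 0 ≤ γ t₀ x ∧ ∀ t > 0, A t x ≠ ⊤} with hS
  set f := itK Ω k S (fun x => ENNReal.ofReal (U t₀ x)) with hf
  have hf0 : ∀ x, f 0 x = ENNReal.ofReal (U t₀ x) := fun x => rfl
  have hfs : ∀ n, ∀ x ∈ S, f (n+1) x = ∫⁻ y in Ω, ENNReal.ofReal (k (x - y)) * f n y := by
    intro n x hx
    rw [hf]; simp only [itK]; rw [if_pos hx]
  have hfn : ∀ n, ∀ x ∉ S, f (n+1) x = 0 := by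
    intro n x hx
    rw [hf]; simp only [itK]; rw [if_neg hx]
  have hlowA : ∀ n t x, (∀ y, ENNReal.ofReal ((d * (t - t₀))^n / (n.factorial : ℝ)) * f n y
      ≤ ENNReal.ofReal (U t y)) → x ∈ S →
      ENNReal.ofReal ((d * (t - t₀))^n / (n.factorial : ℝ)) * f (n+1) x ≤ A t x := by
    intro n t x h hx
    rw [hfs n x hx, ← lintegral_const_mul' _ _ ENNReal.ofReal_ne_top]
    refine lintegral_mono fun y => ?_
    dsimp only
    rw [mul_left_comm]
    gcongr
    exact h y
  have hfin_of : ∀ n, (∀ t ≥ t₀, ∀ y, ENNReal.ofReal ((d * (t - t₀))^n / (n.factorial : ℝ)) * f n y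
      ≤ ENNReal.ofReal (U t y)) → ∀ x ∈ S, f (n+1) x ≠ ⊤ := by
    intro n h x hx htop
    have h1 := hlowA n (t₀+1) x (h (t₀+1) (by linarith)) hx
    rw [htop, ENNReal.mul_top] at h1
    · exact hx.2 (t₀+1) (by linarith) (top_le_iff.1 h1)
    · simp only [ne_eq, ENNReal.ofReal_eq_zero, not_le]
      have : 0 < d * (t₀ + 1 - t₀) := by simpa using hd
      positivity
  have hlow : ∀ n, ∀ t ≥ t₀, ∀ x, ENNReal.ofReal ((d * (t - t₀))^n / (n.factorial : ℝ)) * f n x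
      ≤ ENNReal.ofReal (U t x) := by
    intro n
    induction n with
    | zero =>
      intro t ht x
      simp only [pow_zero, Nat.factorial_zero, Nat.cast_one, div_one, ENNReal.ofReal_one, one_mul, hf0]
      exact ENNReal.ofReal_le_ofReal (hUmono x t₀ t ht₀.le ht)
    | succ n ih =>
      intro t ht x
      by_cases hx : x ∈ S
      swap
      · rw [hfn n x hx]; simp
      have hfin := hfin_of n ih x hx
      set a := (f (n+1) x).toReal with ha
      have hfa : f (n+1) x = ENNReal.ofReal a := (ENNReal.ofReal_toReal hfin).symm
      have hnn : ∀ t ≥ t₀, 0 ≤ d * (t - t₀) := fun t ht => mul_nonneg hd.le (by linarith)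
      have hq : ∀ t ≥ t₀, (d * (t - t₀))^n / (n.factorial : ℝ) * a ≤ Real.exp (d * t) * I x t := by
        intro t ht
        have h1 := hlowA n t x (ih t ht) hx
        have hnt := hnn t ht
        rw [hAI, ← ENNReal.ofReal_le_iff_le_toReal (hx.2 t (by linarith)),
          ENNReal.ofReal_mul (by positivity), ← hfa]
        exact h1
      have h2 := odeLow hd (hcont x) (hg x) (hi x) ht₀.le hx.1
        (hasDerivAt_polyQ d 0 a t₀ n) (by
          intro t ht
          have := hq t (le_of_lt ht)
          simp only [zero_mul, zero_add]
          gcongr) (by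
          simp only [zero_mul, zero_add, sub_self, mul_zero, ne_eq, Nat.add_eq_zero_iff, one_ne_zero,
            and_false, not_false_eq_true, zero_pow, zero_div]
          exact mul_nonneg (Real.exp_pos _).le hx.1) ht
      simp only [zero_mul, zero_add] at h2
      have hnt := hnn t ht
      rw [hfa, ← ENNReal.ofReal_mul (by positivity)]
      refine ENNReal.ofReal_le_ofReal (h2.trans ?_)
      rw [hU]
      dsimp only
      gcongr
      exact le_max_left _ _
  have hfin := fun n => hfin_of n (hlow n)
  have hup : ∀ n, ∀ t, 0 ≤ t → t ≤ t₀ → ∀ x ∈ Ω, ENNReal.ofReal (U t x) ≤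
      ENNReal.ofReal (c₀ * Real.exp (d * t)) +
        ENNReal.ofReal ((d * (t - 0))^n / (n.factorial : ℝ)) * f n x := by
    intro n
    induction n with
    | zero =>
      intro t h0 ht x hx
      simp only [pow_zero, Nat.factorial_zero, Nat.cast_one, div_one, ENNReal.ofReal_one, one_mul, hf0]
      exact (ENNReal.ofReal_le_ofReal (hUmono x t t₀ h0 ht)).trans le_add_self
    | succ n ih =>
      intro t h0 ht x hx
      by_cases hpos : 0 ≤ γ t₀ x
      swap
      · have : ¬ 0 ≤ γ t x := fun h => hpos (odePos hd (hcont x) (hg x) (hi x) h0 ht h)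
        have : U t x = 0 := by
          rw [hU]; simp [max_eq_right (not_le.1 this).le]
        rw [this]; simp
      by_cases hfinA : ∀ t > 0, A t x ≠ ⊤
      swap
      · push Not at hfinA
        have hz := hdich x hfinA
        have h2 := odeUp hd (hcont x) (hg x) (t₀ := t₀) (hasDerivAt_polyQ d c₀ 0 0 0) (by
            intro t ht _
            rw [hz t ht]
            simp only [mul_zero, add_zero]
            positivity) (by simpa using hinit x hx) h0 ht
        refine le_trans (ENNReal.ofReal_le_ofReal ?_) le_self_add
        simp only [mul_zero, add_zero] at h2
        rw [hU]
        dsimp only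
        rw [mul_max_of_nonneg _ _ (Real.exp_pos _).le]
        exact max_le h2 (by rw [mul_zero]; positivity)
      have hxS : x ∈ S := ⟨hpos, hfinA⟩
      have hfin := hfin n x hxS
      set a := (f (n+1) x).toReal with ha
      have ha0 : 0 ≤ a := ENNReal.toReal_nonneg
      have hfa : f (n+1) x = ENNReal.ofReal a := (ENNReal.ofReal_toReal hfin).symm
      have hq : ∀ t > 0, t < t₀ → Real.exp (d * t) * I x t ≤
          c₀ * Real.exp (d * t) + (d * (t - 0))^n / (n.factorial : ℝ) * a := by
        intro t h0 ht
        have hnt : 0 ≤ d * (t - 0) := by rw [sub_zero]; positivity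
        rw [hAI]
        refine ENNReal.toReal_le_of_le_ofReal (by positivity) ?_
        rw [ENNReal.ofReal_add (by positivity) (by positivity),
          ENNReal.ofReal_mul (p := (d * (t - 0))^n / (n.factorial : ℝ)) (by positivity), ← hfa,
          hfs n x hxS]
        calc A t x ≤ ∫⁻ y in Ω, (ENNReal.ofReal (c₀ * Real.exp (d * t)) * ENNReal.ofReal (k (x - y)) +
              ENNReal.ofReal ((d * (t - 0))^n / (n.factorial : ℝ)) *
                (ENNReal.ofReal (k (x - y)) * f n y)) := by
              refine setLIntegral_mono' measurableSet_Ioo fun y hy => ?_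
              refine (mul_le_mul_right (ih t h0.le ht.le y hy) (ENNReal.ofReal (k (x - y)))).trans ?_
              refine le_of_eq ?_
              ring
          _ = _ := by
              rw [lintegral_add_left (by fun_prop), lintegral_const_mul' _ _ ENNReal.ofReal_ne_top,
                lintegral_const_mul' _ _ ENNReal.ofReal_ne_top, (kint P k hk0 hP hper hint x).1, mul_one]
      have h2 := odeUp hd (hcont x) (hg x) (t₀ := t₀) (hasDerivAt_polyQ d c₀ a 0 n) (by
            intro t h0 ht
            have := hq t h0 ht
            gcongr) (by simpa using hinit x hx) h0 ht
      have hnt : 0 ≤ d * (t - 0) := by rw [sub_zero]; positivity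
      rw [hfa, ← ENNReal.ofReal_mul (by positivity), ← ENNReal.ofReal_add (by positivity) (by positivity)]
      refine ENNReal.ofReal_le_ofReal ?_
      rw [hU]
      dsimp only
      rw [mul_max_of_nonneg _ _ (Real.exp_pos _).le]
      exact max_le h2 (by rw [mul_zero]; positivity)
  have hfinal : ∀ n : ℕ, U t₀ x₀ ≤ c₀ * Real.exp (d * t₀) + (1/2)^n * U (3 * t₀) x₀ := by
    intro n
    have h1 := hup n t₀ ht₀.le le_rfl x₀ hx₀
    have h2 := hlow n (3 * t₀) (by linarith) x₀
    have h3 : (d * (t₀ - 0))^n / (n.factorial : ℝ) =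
        (1/2)^n * ((d * (3 * t₀ - t₀))^n / (n.factorial : ℝ)) := by
      rw [← mul_div_assoc, ← mul_pow]; congr 2; ring
    rw [h3, ENNReal.ofReal_mul (p := (1/2)^n) (by positivity), mul_assoc] at h1
    have h4 : ENNReal.ofReal (U t₀ x₀) ≤ ENNReal.ofReal (c₀ * Real.exp (d * t₀)) +
        ENNReal.ofReal ((1/2)^n) * ENNReal.ofReal (U (3 * t₀) x₀) := h1.trans (by gcongr)
    have := hU0 (3*t₀) x₀
    rw [← ENNReal.ofReal_mul (by positivity), ← ENNReal.ofReal_add (by positivity) (by positivity)] at h4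
    exact (ENNReal.ofReal_le_ofReal_iff (by positivity)).1 h4
  have hlim : Tendsto (fun n : ℕ => c₀ * Real.exp (d * t₀) + (1/2)^n * U (3 * t₀) x₀) atTop
      (nhds (c₀ * Real.exp (d * t₀) + 0 * U (3 * t₀) x₀)) :=
    ((tendsto_pow_atTop_nhds_zero_of_lt_one (by norm_num) (by norm_num)).mul_const _).const_add _
  have h5 := ge_of_tendsto' hlim hfinal
  rw [zero_mul, add_zero, mul_comm c₀] at h5
  exact (le_max_left _ _).trans (le_of_mul_le_mul_left h5 (Real.exp_pos _))

theorem stmt_14 (d c₀ ℓ₀ M L : ℝ)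
    (hd : 0 < d) (hc₀ : 0 < c₀) (hℓ₀ : 0 < ℓ₀) (hM : 0 < M) (hL : 0 < L)
    (kst : ℝ → ℝ) (hkst_nonneg : ∀ x, 0 ≤ kst x)
    (hkst_meas : Measurable kst)
    (hkst_per : Function.Periodic kst (M + L))
    (hkst_int : ∫ x in Set.Ioo (0:ℝ) (M + L), kst x = 1)
    (γ : ℝ → ℝ → ℝ)
    (hγ_cont : ∀ x, ContinuousOn (fun t => γ t x) (Set.Ici 0))
    (hγ_meas : ∀ t, Measurable (γ t))
    (hγ_per : ∀ t x, γ t (x + (M + L)) = γ t x)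
    (hpde : ∀ t > (0:ℝ), ∀ x, HasDerivAt (fun s => γ s x)
        (d * (∫ y in Set.Ioo (0:ℝ) (M + L), kst (x - y) * max (γ t y) 0)
          - d * max (γ t x) 0) t)
    (hinit_in : ∀ x ∈ Set.Icc (0:ℝ) M, γ 0 x = c₀)
    (hinit_out : ∀ x ∈ Set.Ioo M (M + L), γ 0 x = -ℓ₀) :
    (∀ T > (0:ℝ),
      volume ({x | 0 ≤ γ T x} ∩ Set.Ioo M (M + L)) ≤
        ENNReal.ofReal ((c₀ / ℓ₀) * M)) ∧
    (L > (c₀ / ℓ₀) * M →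
      volume ({x | ∃ t ≥ (0:ℝ), 0 ≤ γ t x} ∩ Set.Ioo 0 (M + L)) <
        ENNReal.ofReal (M + L)) := by
  have hP : 0 < M + L := by positivity
  have hinit : ∀ x ∈ Set.Ioo (0:ℝ) (M + L), -ℓ₀ ≤ γ 0 x ∧ γ 0 x ≤ c₀ := by
    intro x hx
    rcases le_or_gt x M with h | h
    · rw [hinit_in x ⟨hx.1.le, h⟩]; constructor <;> linarith
    · rw [hinit_out x ⟨h, hx.2⟩]; constructor <;> linarith
  have hsup := supBound d c₀ (M + L) hd hc₀ hP kst hkst_nonneg hkst_meas hkst_per hkst_int γ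
    hγ_cont hγ_meas hpde (fun x hx => (hinit x hx).2)
  have hkint := kint (M + L) kst hkst_nonneg hP hkst_per hkst_int
  set Ω := Set.Ioo (0:ℝ) (M + L) with hΩ
  set I : ℝ → ℝ → ℝ := fun x t => ∫ y in Ω, kst (x - y) * max (γ t y) 0 with hI
  have hI0 : ∀ x t, 0 ≤ I x t := fun x t =>
    integral_nonneg fun y => mul_nonneg (hkst_nonneg _) (le_max_right _ _)
  have hi : ∀ x, ∀ t > 0, 0 ≤ I x t := fun x t _ => hI0 x t
  have hg : ∀ x, ∀ t > 0, HasDerivAt (fun s => γ s x) (d * I x t - d * max (γ t x) 0) t :=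
    fun x t ht => hpde t ht x
  have hpos : ∀ x s t, 0 ≤ s → s ≤ t → 0 ≤ γ s x → 0 ≤ γ t x := fun x s t hs hst h =>
    odePos hd (hγ_cont x) (hg x) (hi x) hs hst h
  have hlow : ∀ t ≥ 0, ∀ x ∈ Ω, -ℓ₀ ≤ γ t x := by
    intro t ht x hx
    have h := odeA hd (hγ_cont x) (hg x) (hi x) le_rfl ht
    have h1 : -ℓ₀ ≤ min (γ 0 x) 0 := le_min (hinit x hx).1 (by linarith)
    exact (h1.trans h).trans (min_le_left _ _)
  have hu : ∀ t ≥ 0, ∀ x ∈ Ω, max (γ t x) 0 ≤ c₀ := fun t ht x hx =>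
    max_le (hsup t ht x hx) hc₀.le
  set J : ℝ → ℝ → ENNReal := fun t x =>
    ∫⁻ y in Ω, ENNReal.ofReal (kst (x - y)) * ENNReal.ofReal (max (γ t y) 0) with hJ
  have hIJ : ∀ t x, I x t = (J t x).toReal := by
    intro t x
    rw [hI, hJ]
    dsimp only
    rw [integral_eq_lintegral_of_nonneg_ae]
    · congr 1
      refine lintegral_congr fun y => ?_
      rw [← ENNReal.ofReal_mul (hkst_nonneg _)]
    · exact Eventually.of_forall fun y => mul_nonneg (hkst_nonneg _) (le_max_right _ _)
    · have := hγ_meas t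
      refine Measurable.aestronglyMeasurable ?_
      fun_prop
  have hJle : ∀ t ≥ 0, ∀ x, J t x ≤ ENNReal.ofReal c₀ := by
    intro t ht x
    calc J t x ≤ ∫⁻ y in Ω, ENNReal.ofReal (kst (x - y)) * ENNReal.ofReal c₀ := by
          refine setLIntegral_mono' measurableSet_Ioo fun y hy => ?_
          gcongr
          exact hu t ht y hy
      _ = _ := by
          rw [lintegral_mul_const' _ _ ENNReal.ofReal_ne_top, (hkint x).1, one_mul]
  have hIle : ∀ t ≥ 0, ∀ x, I x t ≤ c₀ := by
    intro t ht x
    rw [hIJ]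
    exact ENNReal.toReal_le_of_le_ofReal hc₀.le (hJle t ht x)
  have hJm2 : ∀ t, Measurable (Function.uncurry fun x y : ℝ =>
      ENNReal.ofReal (kst (x - y)) * ENNReal.ofReal (max (γ t y) 0)) := by
    intro t
    have := hγ_meas t
    unfold Function.uncurry
    fun_prop
  have hJm : ∀ t, Measurable (J t) := fun t => (hJm2 t).lintegral_prod_right'
  have hIm : ∀ t, Measurable (fun x => I x t) := by
    intro t
    simp only [hIJ]
    exact (hJm t).ennreal_toReal
  have hJint : ∀ t, ∫⁻ x in Ω, J t x = ∫⁻ y in Ω, ENNReal.ofReal (max (γ t y) 0) := by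
    intro t
    rw [hJ]
    dsimp only
    rw [lintegral_lintegral_swap (hJm2 t).aemeasurable]
    refine lintegral_congr fun y => ?_
    rw [lintegral_mul_const' _ _ ENNReal.ofReal_ne_top, (hkint y).2, one_mul]
  have part1 : ∀ T > (0:ℝ), volume ({x | 0 ≤ γ T x} ∩ Set.Ioo M (M + L)) ≤
        ENNReal.ofReal ((c₀ / ℓ₀) * M) := by
    intro T hT
    have hSm0 : MeasurableSet {x | 0 ≤ γ T x} := measurableSet_le measurable_const (hγ_meas T)
    set S := {x | 0 ≤ γ T x} ∩ Ω with hS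
    have hSm : MeasurableSet S := hSm0.inter measurableSet_Ioo
    have hSΩ : S ⊆ Ω := Set.inter_subset_right
    have hΩfin : volume Ω < ⊤ := measure_Ioo_lt_top
    have hSfin : volume S < ⊤ := (measure_mono hSΩ).trans_lt hΩfin
    haveI : IsFiniteMeasure (volume.restrict S) := ⟨by simpa using hSfin⟩
    have hmem : ∀ᵐ x ∂(volume.restrict S), x ∈ S := ae_restrict_mem hSm
    have hbd : ∀ t ≥ 0, ∀ x ∈ Ω, ‖γ t x‖ ≤ c₀ + ℓ₀ := by
      intro t ht x hx
      rw [Real.norm_eq_abs, abs_le]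
      have := hlow t ht x hx
      have := hsup t ht x hx
      constructor <;> linarith
    have hγint : ∀ t ≥ 0, Integrable (γ t) (volume.restrict S) := by
      intro t ht
      refine Integrable.of_bound (hγ_meas t).aestronglyMeasurable (c₀ + ℓ₀) ?_
      filter_upwards [hmem] with x hx using hbd t ht x (hSΩ hx)
    have huint : ∀ t ≥ 0, Integrable (fun x => max (γ t x) 0) (volume.restrict S) :=
      fun t ht => (hγint t ht).pos_part
    have hIint : ∀ t ≥ 0, Integrable (fun x => I x t) (volume.restrict S) := by
      intro t ht
      refine Integrable.of_bound (hIm t).aestronglyMeasurable c₀ ?_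
      refine Eventually.of_forall fun x => ?_
      rw [Real.norm_eq_abs, abs_of_nonneg (hI0 x t)]
      exact hIle t ht x
    have hmass : ∀ t ≥ 0, t ≤ T → ∫ x in S, I x t ≤ ∫ x in S, max (γ t x) 0 := by
      intro t ht htT
      rw [integral_eq_lintegral_of_nonneg_ae (Eventually.of_forall fun x => hI0 x t)
        (hIm t).aestronglyMeasurable,
        integral_eq_lintegral_of_nonneg_ae (f := fun x => max (γ t x) 0)
        (Eventually.of_forall fun x => le_max_right _ _)
        (huint t ht).aestronglyMeasurable]
      refine ENNReal.toReal_mono ?_ ?_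
      · have := (huint t ht).lintegral_lt_top
        exact this.ne
      · calc ∫⁻ x in S, ENNReal.ofReal (I x t) ≤ ∫⁻ x in S, J t x := by
              refine lintegral_mono fun x => ?_
              rw [hIJ]; exact ENNReal.ofReal_toReal_le
          _ ≤ ∫⁻ x in Ω, J t x := lintegral_mono_set hSΩ
          _ = ∫⁻ y in Ω, ENNReal.ofReal (max (γ t y) 0) := hJint t
          _ ≤ ∫⁻ y in S, ENNReal.ofReal (max (γ t y) 0) := by
              rw [← lintegral_indicator measurableSet_Ioo, ← lintegral_indicator hSm]
              refine lintegral_mono fun y => ?_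
              by_cases hy : y ∈ S
              · rw [Set.indicator_of_mem hy, Set.indicator_of_mem (hSΩ hy)]
              · rw [Set.indicator_of_notMem hy]
                by_cases hy2 : y ∈ Ω
                · rw [Set.indicator_of_mem hy2]
                  have : ¬ 0 ≤ γ t y := fun h => hy ⟨hpos y t T ht htT h, hy2⟩
                  rw [max_eq_right (not_le.1 this).le]; simp
                · rw [Set.indicator_of_notMem hy2]
    have hderiv : ∀ t > 0, HasDerivAt (fun t => ∫ x in S, γ t x)
        (∫ x in S, (d * I x t - d * max (γ t x) 0)) t := by
      intro t ht
      refine (hasDerivAt_integral_of_dominated_loc_of_deriv_le (F := γ) (s := Set.Ioi 0)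
        (F' := fun t x => d * I x t - d * max (γ t x) 0)
        (bound := fun _ => d * c₀) (Ioi_mem_nhds ht)
        (Eventually.of_forall fun t => (hγ_meas t).aestronglyMeasurable) (hγint t ht.le)
        ?_ ?_ (integrable_const _) ?_).2
      · have := hIm t
        have := hγ_meas t
        refine Measurable.aestronglyMeasurable ?_
        fun_prop
      · filter_upwards [hmem] with x hx r hr
        have hr : 0 < r := hr
        have h1 := hI0 x r
        have h2 := hIle r hr.le x
        have h3 := hu r hr.le x (hSΩ hx)
        have h4 : 0 ≤ max (γ r x) 0 := le_max_right _ _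
        rw [← mul_sub, norm_mul, Real.norm_eq_abs, Real.norm_eq_abs, abs_of_pos hd]
        gcongr
        rw [abs_le]; constructor <;> linarith
      · exact Eventually.of_forall fun x r hr => hg x r hr
    have hanti : AntitoneOn (fun t => ∫ x in S, γ t x) (Set.Icc 0 T) := by
      refine antitoneOn_of_hasDerivWithinAt_nonpos (convex_Icc 0 T)
        (f' := fun t => ∫ x in S, (d * I x t - d * max (γ t x) 0)) ?_ ?_ ?_
      · intro t ht
        refine continuousWithinAt_of_dominated (bound := fun _ => c₀ + ℓ₀)
          (Eventually.of_forall fun t => (hγ_meas t).aestronglyMeasurable) ?_ (integrable_const _) ?_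
        · filter_upwards [self_mem_nhdsWithin] with r hr
          filter_upwards [hmem] with x hx using hbd r hr.1 x (hSΩ hx)
        · exact Eventually.of_forall fun x => (hγ_cont x).mono Set.Icc_subset_Ici_self t ht
      · intro t ht
        rw [interior_Icc] at ht
        exact (hderiv t ht.1).hasDerivWithinAt
      · intro t ht
        rw [interior_Icc] at ht
        rw [integral_sub ((hIint t ht.1.le).const_mul d) ((huint t ht.1.le).const_mul d),
          integral_const_mul, integral_const_mul]
        have := mul_le_mul_of_nonneg_left (hmass t ht.1.le ht.2.le) hd.le
        linarith
    have h0T := hanti (a := 0) (b := T) ⟨le_rfl, hT.le⟩ ⟨hT.le, le_rfl⟩ hT.le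
    simp only at h0T
    have hTnn : 0 ≤ ∫ x in S, γ T x := setIntegral_nonneg hSm fun x hx => hx.1
    set B := {x | 0 ≤ γ T x} ∩ Set.Ioo M (M + L) with hB
    set C := S ∩ Set.Ioc 0 M with hC
    have hBm : MeasurableSet B := hSm0.inter measurableSet_Ioo
    have hCm : MeasurableSet C := hSm.inter measurableSet_Ioc
    have hSBC : S = C ∪ B := by
      ext x
      simp only [hS, hC, hB, hΩ, Set.mem_inter_iff, Set.mem_union, Set.mem_setOf_eq, Set.mem_Ioo,
        Set.mem_Ioc]
      constructor
      · rintro ⟨h1, h2, h3⟩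
        rcases le_or_gt x M with h | h
        · exact Or.inl ⟨⟨h1, h2, h3⟩, h2, h⟩
        · exact Or.inr ⟨h1, h, h3⟩
      · rintro (h | h)
        · exact h.1
        · exact ⟨h.1, by linarith [h.2.1], h.2.2⟩
    have hdisj : Disjoint C B := by
      rw [Set.disjoint_left]
      intro x hx hx'
      have h1 := hx.2.2
      have h2 := hx'.2.1
      linarith
    have hBS : B ⊆ S := by rw [hSBC]; exact Set.subset_union_right
    have hCS : C ⊆ S := Set.inter_subset_left
    have hint0 : IntegrableOn (γ 0) S := hγint 0 le_rfl
    have hsplit : ∫ x in S, γ 0 x = c₀ * volume.real C + (-ℓ₀) * volume.real B := by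
      have e1 : ∫ x in S, γ 0 x = (∫ x in C, γ 0 x) + ∫ x in B, γ 0 x := by
        conv_lhs => rw [hSBC]
        exact setIntegral_union hdisj hBm (hint0.mono_set hCS) (hint0.mono_set hBS)
      rw [e1, setIntegral_congr_fun (g := fun _ => c₀) hCm
        (fun x hx => hinit_in x ⟨hx.2.1.le, hx.2.2⟩),
        setIntegral_congr_fun (g := fun _ => -ℓ₀) hBm (fun x hx => hinit_out x hx.2)]
      simp [mul_comm]
    have hCle : volume.real C ≤ M := by
      have h : volume.real C ≤ volume.real (Set.Ioc 0 M) :=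
        measureReal_mono Set.inter_subset_right (by simp)
      simpa [Real.volume_real_Ioc_of_le hM.le] using h
    have hBfin : volume B ≠ ⊤ := ((measure_mono hBS).trans_lt hSfin).ne
    have hBle : volume.real B ≤ (c₀ / ℓ₀) * M := by
      rw [div_mul_eq_mul_div, le_div_iff₀ hℓ₀]
      have := mul_le_mul_of_nonneg_left hCle hc₀.le
      nlinarith
    rw [← ofReal_measureReal hBfin]
    exact ENNReal.ofReal_le_ofReal hBle
  refine ⟨part1, fun hLM => ?_⟩
  set E : ℕ → Set ℝ := fun n => {x | 0 ≤ γ ((n:ℝ) + 1) x} ∩ Set.Ioo M (M + L) with hE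
  have hEmono : Monotone E := by
    intro m n hmn x hx
    refine ⟨hpos x (m+1) (n+1) (by positivity) ?_ hx.1, hx.2⟩
    have : (m:ℝ) ≤ n := by exact_mod_cast hmn
    linarith
  have hEle : volume (⋃ n, E n) ≤ ENNReal.ofReal ((c₀ / ℓ₀) * M) := by
    rw [hEmono.measure_iUnion]
    exact iSup_le fun n => part1 _ (by positivity)
  have hsub : {x | ∃ t ≥ (0:ℝ), 0 ≤ γ t x} ∩ Ω ⊆ Set.Ioc 0 M ∪ ⋃ n, E n := by
    rintro x ⟨⟨t, ht, h⟩, hx⟩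
    rcases le_or_gt x M with h' | h'
    · exact Or.inl ⟨hx.1, h'⟩
    · right
      obtain ⟨n, hn⟩ := exists_nat_ge t
      exact Set.mem_iUnion.2 ⟨n, hpos x t (n+1) ht (by linarith) h, h', hx.2⟩
  calc _ ≤ volume (Set.Ioc 0 M ∪ ⋃ n, E n) := measure_mono hsub
    _ ≤ volume (Set.Ioc 0 M) + volume (⋃ n, E n) := measure_union_le _ _
    _ ≤ ENNReal.ofReal M + ENNReal.ofReal ((c₀ / ℓ₀) * M) := by
        gcongr
        simp
    _ = ENNReal.ofReal (M + (c₀ / ℓ₀) * M) := by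
        rw [ENNReal.ofReal_add hM.le (by positivity)]
    _ < _ := (ENNReal.ofReal_lt_ofReal_iff hP).2 (by linarith)
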